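/- (1) The ideal 𝒥_F absorbs the shifted product: if P ∈ 𝒥_F and Q ∈ ℂ⟨A⟩, then both P ⋆ Q and Q ⋆ P lie in 𝒥_F; consequently ⋆ induces a well-defined bilinear product on the fusion algebra ℱ = ℂ⟨A⟩/𝒥_F. (2) If P, Q ∈ 𝐹̃ then P ⋆ Q ∈ 𝐹̃. -/

import Mathlib

inductive Brk : Type
  | lt  -- ⟨
  | gt  -- ⟩
deriving DecidableEq

/-- finite sequences of pairs of positive integers -/
abbrev PSeq := List (ℕ+ × ℕ+)

/-- the alphabet 𝒜: red letters `a_{•γ}` and blue letters `a_{γ◇}` -/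
inductive FLetter : Type
  | red (b : Brk) (γ : PSeq)
  | blue (γ : PSeq) (d : Brk)
deriving DecidableEq

/-- the free associative algebra ℂ⟨𝒜⟩ -/
abbrev FreeA := FreeAlgebra ℂ FLetter

noncomputable def ιA (e : FLetter) : FreeA := FreeAlgebra.ι ℂ e

noncomputable def wordProd (l : List FLetter) : FreeA := (l.map ιA).prod

/-- the letters of `𝒜_{⟨ ⟩}` -/
def IsCentral : FLetter → Prop
  | .red .lt _ => True
  | .blue _ .gt => True
  | _ => False

/-- the generating relations of the ideal 𝒥_F -/
inductive FRel : FreeA → FreeA → Prop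
  | central (e f : FLetter) (he : IsCentral e) :
      FRel (ιA e * ιA f) (ιA f * ιA e)
  | red_comm (b b' : Brk) (γ γ' : PSeq) :
      FRel (ιA (.red b γ) * ιA (.red b' γ')) (ιA (.red b' γ') * ιA (.red b γ))
  | blue_comm (d d' : Brk) (γ γ' : PSeq) :
      FRel (ιA (.blue γ d) * ιA (.blue γ' d')) (ιA (.blue γ' d') * ιA (.blue γ d))
  | fusion (b d : Brk) (α β : PSeq) (v x : List FLetter) :
      FRel (ιA (.red b α) * wordProd v * ιA (.blue α .lt) * ιA (.red .gt β) *
              wordProd x * ιA (.blue β d))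
           (ιA (.red b α) * wordProd v * ιA (.red .gt β) * ιA (.blue α .lt) *
              wordProd x * ιA (.blue β d)
             + ιA (.red b (α ++ β)) * wordProd v * wordProd x * ιA (.blue (α ++ β) d))

/-- the fusion algebra ℱ = ℂ⟨𝒜⟩/𝒥_F -/
abbrev FA := RingQuot FRel

noncomputable def mkF : FreeA →ₐ[ℂ] FA := RingQuot.mkAlgHom ℂ FRel

/-- the red letter `a_{•γ}` in ℱ -/
noncomputable def Rl (b : Brk) (γ : PSeq) : FA := mkF (ιA (.red b γ))

/-- the blue letter `a_{γ◇}` in ℱ -/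
noncomputable def Bll (γ : PSeq) (d : Brk) : FA := mkF (ιA (.blue γ d))

def FLetter.seq : FLetter → PSeq
  | .red _ γ => γ
  | .blue γ _ => γ

/-- `|a| = max_ℓ i_ℓ` for a letter with sequence `γ` -/
def seqSize (γ : PSeq) : ℕ := (γ.map fun p => (p.1 : ℕ)).foldr max 0

/-- `ω(a) = max_ℓ j_ℓ` for a letter with sequence `γ` -/
def seqOmega (γ : PSeq) : ℕ := (γ.map fun p => (p.2 : ℕ)).foldr max 0

def wordSize (l : List FLetter) : ℕ := (l.map fun e => seqSize e.seq).foldr max 0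

def wordOmega (l : List FLetter) : ℕ := (l.map fun e => seqOmega e.seq).foldr max 0

def addP (a : ℕ+) (m : ℕ) : ℕ+ := ⟨a.1 + m, Nat.add_pos_left a.2 m⟩

/-- the shift of a sequence by `(m, n)` -/
def shiftSeq (m n : ℕ) (γ : PSeq) : PSeq := γ.map fun p => (addP p.1 m, addP p.2 n)

/-- the shift of a letter by `(m, n)` -/
def FLetter.shift (m n : ℕ) : FLetter → FLetter
  | .red b γ => .red b (shiftSeq m n γ)
  | .blue γ d => .blue (shiftSeq m n γ) d

/-- the shifted product ⋆ on ℂ⟨𝒜⟩ -/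
noncomputable def starF : FreeA →ₗ[ℂ] FreeA →ₗ[ℂ] FreeA :=
  (FreeAlgebra.basisFreeMonoid ℂ FLetter).constr ℂ fun u =>
    (FreeAlgebra.basisFreeMonoid ℂ FLetter).constr ℂ fun v =>
      wordProd (FreeMonoid.toList u ++
        (FreeMonoid.toList v).map
          (FLetter.shift (wordSize (FreeMonoid.toList u)) (wordOmega (FreeMonoid.toList u))))

/-- the two-sided ideal 𝒥_F of ℂ⟨𝒜⟩ -/
noncomputable def JF : TwoSidedIdeal FreeA :=
  TwoSidedIdeal.span {z : FreeA | ∃ x y : FreeA, FRel x y ∧ z = x - y}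

/-- the subspace 𝐹̃ of ℱ spanned by the classes of the words
`a_{•₁α₁}⋯a_{•ₖαₖ}·a_{α₁◇₁}⋯a_{αₖ◇ₖ}` -/
noncomputable def Ftilde : Submodule ℂ FA :=
  Submodule.span ℂ
    {x : FA | ∃ (k : ℕ) (bs ds : Fin k → Brk) (seqs : Fin k → PSeq),
      x = ((List.finRange k).map fun i => Rl (bs i) (seqs i)).prod *
            ((List.finRange k).map fun i => Bll (seqs i) (ds i)).prod}

lemma mkF_rel {x y : FreeA} (h : FRel x y) : mkF x = mkF y := RingQuot.mkAlgHom_rel ℂ h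

lemma mem_JF (z : FreeA) : z ∈ JF ↔ mkF z = 0 := by
  constructor
  · intro h
    have : JF ≤ TwoSidedIdeal.ker mkF := by
      refine TwoSidedIdeal.span_le.2 ?_
      rintro z ⟨x, y, h, rfl⟩
      show x - y ∈ TwoSidedIdeal.ker mkF
      rw [TwoSidedIdeal.mem_ker, map_sub, mkF_rel h, sub_self]
    exact (TwoSidedIdeal.mem_ker _).1 (this h)
  · intro h
    have w : ∀ ⦃x y : FreeA⦄, FRel x y → JF.ringCon.mk' x = JF.ringCon.mk' y := by
      intro x y hxy
      have h1 : x - y ∈ JF := TwoSidedIdeal.subset_span ⟨x, y, hxy, rfl⟩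
      exact (RingCon.eq _).2 ((TwoSidedIdeal.rel_iff _ _ _).2 h1)
    have h2 := RingQuot.lift_mkRingHom_apply JF.ringCon.mk' w z
    have h3 : RingQuot.mkRingHom FRel z = 0 := by
      rw [← RingQuot.mkAlgHom_coe ℂ FRel]; exact h
    rw [h3, map_zero] at h2
    have h4 : JF.ringCon.mk' z = JF.ringCon.mk' 0 := by rw [← h2, map_zero]
    exact (TwoSidedIdeal.mem_iff _ _).2 ((RingCon.eq _).1 h4)

lemma basis_word (u : FreeMonoid FLetter) :
    FreeAlgebra.basisFreeMonoid ℂ FLetter u = wordProd (FreeMonoid.toList u) := by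
  simp [FreeAlgebra.basisFreeMonoid, FreeAlgebra.equivMonoidAlgebraFreeMonoid, wordProd,
    FreeMonoid.lift_apply]
  rfl

lemma word_induction {p : FreeA → Prop} (h0 : p 0) (hadd : ∀ x y, p x → p y → p (x + y))
    (hsmul : ∀ (c : ℂ) x, p x → p (c • x)) (hw : ∀ l, p (wordProd l)) (z : FreeA) : p z := by
  have := (FreeAlgebra.basisFreeMonoid ℂ FLetter).mem_span z
  induction this using Submodule.span_induction with
  | mem x h => obtain ⟨u, rfl⟩ := h; rw [basis_word]; exact hw _
  | zero => exact h0
  | add x y _ _ hx hy => exact hadd _ _ hx hy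
  | smul c x _ hx => exact hsmul _ _ hx

lemma starF_word (u v : List FLetter) : starF (wordProd u) (wordProd v) =
    wordProd (u ++ v.map (FLetter.shift (wordSize u) (wordOmega u))) := by
  have h1 := basis_word (FreeMonoid.ofList u)
  have h2 := basis_word (FreeMonoid.ofList v)
  rw [FreeMonoid.toList_ofList] at h1 h2
  rw [← h1, ← h2, starF, Module.Basis.constr_basis, Module.Basis.constr_basis]
  simp

lemma wordProd_append (u v : List FLetter) : wordProd (u ++ v) = wordProd u * wordProd v := by
  simp [wordProd]

lemma wordProd_cons (u) (v : List FLetter) : wordProd (u :: v) = ιA u * wordProd v := by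
  simp [wordProd]

lemma wordProd_nil : wordProd [] = 1 := by simp [wordProd]

lemma foldr_max_append (a b : List ℕ) :
    (a ++ b).foldr max 0 = max (a.foldr max 0) (b.foldr max 0) := by
  induction a with
  | nil => simp
  | cons x a ih => simp only [List.cons_append, List.foldr_cons, ih, max_assoc]

lemma wordSize_append (u v : List FLetter) : wordSize (u ++ v) = max (wordSize u) (wordSize v) := by
  simp only [wordSize, List.map_append, foldr_max_append]
lemma wordOmega_append (u v : List FLetter) :
    wordOmega (u ++ v) = max (wordOmega u) (wordOmega v) := by
  simp only [wordOmega, List.map_append, foldr_max_append]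
lemma seqSize_append (u v : PSeq) : seqSize (u ++ v) = max (seqSize u) (seqSize v) := by
  simp only [seqSize, List.map_append, foldr_max_append]
lemma seqOmega_append (u v : PSeq) : seqOmega (u ++ v) = max (seqOmega u) (seqOmega v) := by
  simp only [seqOmega, List.map_append, foldr_max_append]
lemma wordSize_cons (e) (v : List FLetter) :
    wordSize (e :: v) = max (seqSize e.seq) (wordSize v) := rfl
lemma wordOmega_cons (e) (v : List FLetter) :
    wordOmega (e :: v) = max (seqOmega e.seq) (wordOmega v) := rfl
lemma wordSize_nil : wordSize [] = 0 := rfl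
lemma wordOmega_nil : wordOmega [] = 0 := rfl

noncomputable def shiftHom (m n : ℕ) : FreeA →ₐ[ℂ] FreeA :=
  FreeAlgebra.lift ℂ fun e => ιA (e.shift m n)

lemma shiftHom_ι (m n e) : shiftHom m n (ιA e) = ιA (e.shift m n) := by
  simp [shiftHom, ιA]

lemma shiftHom_word (m n) (l : List FLetter) :
    shiftHom m n (wordProd l) = wordProd (l.map (FLetter.shift m n)) := by
  induction l with
  | nil => simp [wordProd]
  | cons a l ih => rw [List.map_cons, wordProd_cons, wordProd_cons, map_mul, ih, shiftHom_ι]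

lemma shiftHom_rel (m n) {x y : FreeA} (h : FRel x y) : FRel (shiftHom m n x) (shiftHom m n y) := by
  cases h with
  | central e f he =>
    simp only [map_mul, shiftHom_ι]
    refine FRel.central _ _ ?_
    rcases e with ⟨_ | _, γ⟩ | ⟨γ, _ | _⟩ <;> trivial
  | red_comm b b' γ γ' => simp only [map_mul, shiftHom_ι]; exact FRel.red_comm _ _ _ _
  | blue_comm b b' γ γ' => simp only [map_mul, shiftHom_ι]; exact FRel.blue_comm _ _ _ _
  | fusion b d α β v x =>
    simp only [map_mul, map_add, shiftHom_ι, shiftHom_word]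
    have := FRel.fusion b d (shiftSeq m n α) (shiftSeq m n β)
      (v.map (FLetter.shift m n)) (x.map (FLetter.shift m n))
    have h : shiftSeq m n (α ++ β) = shiftSeq m n α ++ shiftSeq m n β := by simp [shiftSeq]
    simpa only [FLetter.shift, h] using this

lemma starF_left (q : List FLetter) (P : FreeA) :
    starF (wordProd q) P = wordProd q * shiftHom (wordSize q) (wordOmega q) P := by
  induction P using word_induction with
  | h0 => simp
  | hadd x y hx hy => simp [hx, hy, mul_add]
  | hsmul c x hx => simp [hx]
  | hw l => rw [starF_word, wordProd_append, shiftHom_word]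

lemma shiftHom_JF (m n) {P : FreeA} (h : P ∈ JF) : shiftHom m n P ∈ JF := by
  have : JF ≤ TwoSidedIdeal.comap (shiftHom m n) JF := by
    refine TwoSidedIdeal.span_le.2 ?_
    rintro z ⟨x, y, h, rfl⟩
    show x - y ∈ TwoSidedIdeal.comap (shiftHom m n) JF
    rw [TwoSidedIdeal.mem_comap, map_sub]
    exact TwoSidedIdeal.subset_span ⟨_, _, shiftHom_rel m n h, rfl⟩
  exact (TwoSidedIdeal.mem_comap _).1 (this h)

lemma absorb_right {P : FreeA} (h : P ∈ JF) (Q : FreeA) : mkF (starF Q P) = 0 := by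
  induction Q using word_induction with
  | h0 => simp
  | hadd x y hx hy => simp [hx, hy]
  | hsmul c x hx => simp [hx]
  | hw l => rw [starF_left, map_mul, (mem_JF _).1 (shiftHom_JF _ _ h), mul_zero]

lemma starF_right (p : List FLetter) (Q : FreeA) :
    ∀ u w : List FLetter, starF (wordProd u * wordProd p * wordProd w) Q
      = wordProd u * wordProd p * wordProd w *
        shiftHom (max (wordSize u) (max (wordSize p) (wordSize w)))
          (max (wordOmega u) (max (wordOmega p) (wordOmega w))) Q := by
  intro u w
  rw [← wordProd_append, ← wordProd_append, starF_left]
  simp only [wordSize_append, wordOmega_append, max_assoc]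

lemma starF_rel {x y : FreeA} (h : FRel x y) : ∃ m n : ℕ, ∀ (u w : List FLetter) (Q : FreeA),
    (starF (wordProd u * x * wordProd w) Q = wordProd u * x * wordProd w *
      shiftHom (max (wordSize u) (max m (wordSize w)))
          (max (wordOmega u) (max n (wordOmega w))) Q) ∧
    (starF (wordProd u * y * wordProd w) Q = wordProd u * y * wordProd w *
      shiftHom (max (wordSize u) (max m (wordSize w)))
          (max (wordOmega u) (max n (wordOmega w))) Q) := by
  have two : ∀ e f : FLetter, ∃ m n : ℕ, ∀ (u w : List FLetter) (Q : FreeA),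
    (starF (wordProd u * (ιA e * ιA f) * wordProd w) Q = wordProd u * (ιA e * ιA f) * wordProd w *
      shiftHom (max (wordSize u) (max m (wordSize w)))
          (max (wordOmega u) (max n (wordOmega w))) Q) ∧
    (starF (wordProd u * (ιA f * ιA e) * wordProd w) Q = wordProd u * (ιA f * ιA e) * wordProd w *
      shiftHom (max (wordSize u) (max m (wordSize w)))
          (max (wordOmega u) (max n (wordOmega w))) Q) := by
    intro e f
    refine ⟨wordSize [e, f], wordOmega [e, f], fun u w Q => ⟨?_, ?_⟩⟩
    · have := starF_right [e, f] Q u w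
      simpa only [wordProd_cons, wordProd_nil, mul_one] using this
    · have := starF_right [f, e] Q u w
      have h1 : wordSize [e, f] = wordSize [f, e] := by
        simp only [wordSize_cons, wordSize_nil]; omega
      have h2 : wordOmega [e, f] = wordOmega [f, e] := by
        simp only [wordOmega_cons, wordOmega_nil]; omega
      rw [h1, h2]
      simpa only [wordProd_cons, wordProd_nil, mul_one] using this
  cases h with
  | central e f he => exact two _ _
  | red_comm b b' γ γ' => exact two _ _
  | blue_comm b b' γ γ' => exact two _ _
  | fusion b d α β v x =>
    set p1 : List FLetter := .red b α :: (v ++ .blue α .lt :: .red .gt β :: (x ++ [.blue β d]))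
      with hp1
    set p2 : List FLetter := .red b α :: (v ++ .red .gt β :: .blue α .lt :: (x ++ [.blue β d]))
      with hp2
    set p3 : List FLetter := .red b (α ++ β) :: (v ++ (x ++ [.blue (α ++ β) d])) with hp3
    have s2 : wordSize p2 = wordSize p1 := by
      simp only [hp1, hp2, wordSize_cons, wordSize_append, FLetter.seq]; omega
    have s3 : wordSize p3 = wordSize p1 := by
      simp only [hp1, hp3, wordSize_cons, wordSize_append, FLetter.seq, seqSize_append]; omega
    have o2 : wordOmega p2 = wordOmega p1 := by
      simp only [hp1, hp2, wordOmega_cons, wordOmega_append, FLetter.seq]; omega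
    have o3 : wordOmega p3 = wordOmega p1 := by
      simp only [hp1, hp3, wordOmega_cons, wordOmega_append, FLetter.seq, seqOmega_append]; omega
    have e1 : ιA (.red b α) * wordProd v * ιA (.blue α .lt) * ιA (.red .gt β) *
              wordProd x * ιA (.blue β d) = wordProd p1 := by
      simp only [hp1, wordProd_cons, wordProd_append, wordProd_nil, mul_one, mul_assoc]
    have e2 : ιA (.red b α) * wordProd v * ιA (.red .gt β) * ιA (.blue α .lt) *
              wordProd x * ιA (.blue β d) = wordProd p2 := by
      simp only [hp2, wordProd_cons, wordProd_append, wordProd_nil, mul_one, mul_assoc]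
    have e3 : ιA (.red b (α ++ β)) * wordProd v * wordProd x * ιA (.blue (α ++ β) d)
        = wordProd p3 := by
      simp only [hp3, wordProd_cons, wordProd_append, wordProd_nil, mul_one, mul_assoc]
    rw [e1, e2, e3]
    refine ⟨wordSize p1, wordOmega p1, fun u w Q => ⟨starF_right _ _ _ _, ?_⟩⟩
    have t2 := starF_right p2 Q u w
    have t3 := starF_right p3 Q u w
    rw [s2, o2] at t2
    rw [s3, o3] at t3
    rw [mul_add, add_mul, add_mul, map_add, LinearMap.add_apply, t2, t3]

open scoped Pointwise in
lemma absorb_left {P : FreeA} (h : P ∈ JF) (Q : FreeA) : mkF (starF P Q) = 0 := by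
  rw [JF, TwoSidedIdeal.mem_span_iff_mem_addSubgroup_closure] at h
  induction h using AddSubgroup.closure_induction with
  | zero => simp
  | add x y _ _ hx hy => simp [hx, hy]
  | neg x _ hx => simp [hx]
  | mem z hz =>
    obtain ⟨_, ⟨a, -, _, ⟨x, y, hxy, rfl⟩, rfl⟩, b, -, rfl⟩ := hz
    obtain ⟨m, n, H⟩ := starF_rel hxy
    show mkF (starF (a * (x - y) * b) Q) = 0
    induction a using word_induction with
    | h0 => simp
    | hadd a a' ha ha' => simp only [add_mul, map_add, LinearMap.add_apply, ha, ha', add_zero]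
    | hsmul c a ha => simp only [smul_mul_assoc, map_smul, LinearMap.smul_apply, ha, smul_zero]
    | hw u =>
      induction b using word_induction with
      | h0 => simp
      | hadd a a' ha ha' => simp only [mul_add, map_add, LinearMap.add_apply, ha, ha', add_zero]
      | hsmul c a ha => simp only [mul_smul_comm, map_smul, LinearMap.smul_apply, ha, smul_zero]
      | hw w =>
        rw [mul_sub, sub_mul, map_sub, LinearMap.sub_apply, (H u w Q).1, (H u w Q).2]
        simp only [map_sub, map_mul, mkF_rel hxy, sub_self]

lemma mkF_surj : Function.Surjective mkF := RingQuot.mkAlgHom_surjective ℂ FRel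

lemma star_congr {u u' v v' : FreeA} (hu : mkF u = mkF u') (hv : mkF v = mkF v') :
    mkF (starF u v) = mkF (starF u' v') := by
  have h1 : u - u' ∈ JF := by rw [mem_JF, map_sub, hu, sub_self]
  have h2 : v - v' ∈ JF := by rw [mem_JF, map_sub, hv, sub_self]
  have h3 := absorb_left h1 v
  have h4 := absorb_right h2 u'
  simp only [map_sub, LinearMap.sub_apply] at h3 h4
  exact (sub_eq_zero.1 h3).trans (sub_eq_zero.1 h4)

lemma exists_mstar : ∃ mstar : FA →ₗ[ℂ] FA →ₗ[ℂ] FA,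
      ∀ u v : FreeA, mstar (mkF u) (mkF v) = mkF (starF u v) := by
  have hs := Function.surjInv_eq mkF_surj
  set s := Function.surjInv mkF_surj
  refine ⟨LinearMap.mk₂ ℂ (fun a b => mkF (starF (s a) (s b))) ?_ ?_ ?_ ?_, ?_⟩
  · intro a a' b
    rw [← map_add, ← LinearMap.add_apply, ← map_add]
    exact star_congr (by rw [map_add, hs, hs, hs]) rfl
  · intro c a b
    rw [← map_smul, ← LinearMap.smul_apply, ← map_smul]
    exact star_congr (by rw [map_smul, hs, hs]) rfl
  · intro a b b'
    rw [← map_add, ← map_add]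
    exact star_congr rfl (by rw [map_add, hs, hs, hs])
  · intro c a b
    rw [← map_smul, ← map_smul]
    exact star_congr rfl (by rw [map_smul, hs, hs])
  · intro u v
    exact star_congr (hs _) (hs _)

/-- arcs: a red letter and a matching blue letter -/
structure Arc where
  b : Brk
  s : PSeq
  d : Brk

noncomputable def AR (L : List Arc) : FA := (L.map fun a => Rl a.b a.s).prod
noncomputable def AB (L : List Arc) : FA := (L.map fun a => Bll a.s a.d).prod

lemma AR_append (L M) : AR (L ++ M) = AR L * AR M := by simp [AR]
lemma AB_append (L M) : AB (L ++ M) = AB L * AB M := by simp [AB]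
lemma AR_cons (a L) : AR (a :: L) = Rl a.b a.s * AR L := by simp [AR]
lemma AB_cons (a L) : AB (a :: L) = Bll a.s a.d * AB L := by simp [AB]
lemma AR_nil : AR [] = 1 := by simp [AR]
lemma AB_nil : AB [] = 1 := by simp [AB]

lemma AR_perm {L M : List Arc} (h : L.Perm M) : AR L = AR M := by
  induction h with
  | nil => rfl
  | cons a _ ih => rw [AR_cons, AR_cons, ih]
  | swap a b l =>
    simp only [AR_cons, ← mul_assoc]
    congr 1
    have := mkF_rel (FRel.red_comm b.b a.b b.s a.s)
    simpa only [Rl, Bll, map_mul] using this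
  | trans _ _ h1 h2 => exact h1.trans h2

lemma AB_perm {L M : List Arc} (h : L.Perm M) : AB L = AB M := by
  induction h with
  | nil => rfl
  | cons a _ ih => rw [AB_cons, AB_cons, ih]
  | swap a b l =>
    simp only [AB_cons, ← mul_assoc]
    congr 1
    have := mkF_rel (FRel.blue_comm b.d a.d b.s a.s)
    simpa only [Rl, Bll, map_mul] using this
  | trans _ _ h1 h2 => exact h1.trans h2

lemma fusionFA (b d : Brk) (α β : PSeq) (v x : FA) :
    Rl b α * v * Bll α .lt * Rl .gt β * x * Bll β d =
    Rl b α * v * Rl .gt β * Bll α .lt * x * Bll β d + Rl b (α ++ β) * v * x * Bll (α ++ β) d := by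
  obtain ⟨v, rfl⟩ := mkF_surj v
  obtain ⟨x, rfl⟩ := mkF_surj x
  induction v using word_induction with
  | h0 => simp
  | hadd v v' h h' => simp only [map_add, mul_add, add_mul, h, h']; abel
  | hsmul c v h => simp only [map_smul, mul_smul_comm, smul_mul_assoc, h, smul_add]
  | hw v =>
    induction x using word_induction with
    | h0 => simp
    | hadd v v' h h' => simp only [map_add, mul_add, add_mul, h, h']; abel
    | hsmul c v h => simp only [map_smul, mul_smul_comm, smul_mul_assoc, h, smul_add]
    | hw x =>
      have := mkF_rel (FRel.fusion b d α β v x)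
      simpa only [Rl, Bll, map_mul, map_add] using this

lemma central_blue (α β : PSeq) (b : Brk) : Bll α .gt * Rl b β = Rl b β * Bll α .gt := by
  have := mkF_rel (FRel.central (.blue α .gt) (.red b β) trivial)
  simpa only [Rl, Bll, map_mul] using this

lemma central_red (α β : PSeq) (d : Brk) : Bll α d * Rl .lt β = Rl .lt β * Bll α d := by
  have := mkF_rel (FRel.central (.red .lt β) (.blue α d) trivial)
  simpa only [Rl, Bll, map_mul] using this.symm

lemma AR_AB_mem (L : List Arc) : AR L * AB L ∈ Ftilde := by
  refine Submodule.subset_span ⟨L.length, fun i => (L.get i).b, fun i => (L.get i).d,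
    fun i => (L.get i).s, ?_⟩
  have h1 : ((List.finRange L.length).map fun i => Rl (L.get i).b (L.get i).s)
      = L.map fun a => Rl a.b a.s := by
    conv_rhs => rw [← List.map_get_finRange L, List.map_map]
    rfl
  have h2 : ((List.finRange L.length).map fun i => Bll (L.get i).s (L.get i).d)
      = L.map fun a => Bll a.s a.d := by
    conv_rhs => rw [← List.map_get_finRange L, List.map_map]
    rfl
  rw [h1, h2, AR, AB]

lemma move_one (a : Arc) (L3 : List Arc)
    (IH : ∀ L1 L2 : List Arc, AR (L1 ++ L2) * AB L1 * AR L3 * AB (L2 ++ L3) ∈ Ftilde)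
    (La : List Arc) : ∀ Lb L2 : List Arc,
    AR (La ++ Lb ++ L2) * AB La * Rl a.b a.s * AB Lb * AR L3 * AB (a :: L2 ++ L3) ∈ Ftilde := by
  induction La using List.reverseRecOn with
  | nil =>
    intro Lb L2
    have h := IH Lb (a :: L2)
    have h1 : AR (Lb ++ a :: L2) = AR (Lb ++ L2) * Rl a.b a.s := by
      have : (Lb ++ a :: L2).Perm ((Lb ++ L2) ++ [a]) :=
        List.perm_middle.trans (List.perm_append_singleton a (Lb ++ L2)).symm
      rw [AR_perm this, AR_append, AR_cons, AR_nil, mul_one]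
    rw [h1] at h
    simpa only [List.nil_append, AB_nil, mul_one] using h
  | append_singleton La c ih =>
    intro Lb L2
    have hR : AR (La ++ [c] ++ Lb ++ L2) = Rl c.b c.s * AR (La ++ Lb ++ L2) := by
      rw [← AR_cons]; apply AR_perm
      simp only [List.append_assoc, List.singleton_append]
      exact List.perm_middle
    have hB : ∀ e : Arc, AB (e :: L2 ++ L3) = AB (L2 ++ L3) * Bll e.s e.d := by
      intro e
      have : (e :: L2 ++ L3).Perm ((L2 ++ L3) ++ [e]) :=
        (List.perm_append_singleton e (L2 ++ L3)).symm
      rw [AB_perm this, AB_append, AB_cons, AB_nil, mul_one]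
    have key := ih (c :: Lb) L2
    have hR' : AR (La ++ c :: Lb ++ L2) = Rl c.b c.s * AR (La ++ Lb ++ L2) := by
      rw [← AR_cons]; apply AR_perm
      simp only [List.append_assoc, List.cons_append]
      exact List.perm_middle
    rw [hR', AB_cons] at key
    rw [hR, AB_append, AB_cons, AB_nil, mul_one]
    have comm_case : Bll c.s c.d * Rl a.b a.s = Rl a.b a.s * Bll c.s c.d →
        Rl c.b c.s * AR (La ++ Lb ++ L2) * (AB La * Bll c.s c.d) * Rl a.b a.s * AB Lb * AR L3 *
          AB (a :: L2 ++ L3) ∈ Ftilde := by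
      intro h
      convert key using 1
      have h' : ∀ z : FA, Bll c.s c.d * (Rl a.b a.s * z) = Rl a.b a.s * (Bll c.s c.d * z) := by
        intro z; rw [← mul_assoc, h, mul_assoc]
      simp only [mul_assoc, h']
    obtain ⟨ab, as, ad⟩ := a
    obtain ⟨cb, cs, cd⟩ := c
    cases cd with
    | gt => exact comm_case (central_blue _ _ _)
    | lt =>
      cases ab with
      | lt => exact comm_case (central_red _ _ _)
      | gt =>
        have f := fusionFA cb ad cs as (AR (La ++ Lb ++ L2) * AB La)
          (AB Lb * AR L3 * AB (L2 ++ L3))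
        have k2 := IH (La ++ Lb) (⟨cb, cs ++ as, ad⟩ :: L2)
        have hR2 : AR (La ++ Lb ++ ⟨cb, cs ++ as, ad⟩ :: L2)
            = Rl cb (cs ++ as) * AR (La ++ Lb ++ L2) := by
          rw [AR_perm List.perm_middle, AR_cons]
        rw [hR2, hB, AB_append] at k2
        rw [hB] at key ⊢
        convert Submodule.add_mem _ key k2 using 1
        simp only [mul_assoc] at f ⊢
        exact f

lemma move_all (L3 : List Arc) : ∀ L1 L2 : List Arc,
    AR (L1 ++ L2) * AB L1 * AR L3 * AB (L2 ++ L3) ∈ Ftilde := by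
  induction L3 with
  | nil =>
    intro L1 L2
    have := AR_AB_mem (L1 ++ L2)
    simpa only [AR_nil, mul_one, List.append_nil, AB_append, mul_assoc] using this
  | cons a L3 ih =>
    intro L1 L2
    have := move_one a L3 ih L1 [] L2
    rw [AB_perm (List.perm_middle (a := a) (l₁ := L2) (l₂ := L3)), AR_cons]
    simpa only [List.append_nil, AB_nil, mul_one, mul_assoc, List.cons_append] using this

def arcWord (L : List Arc) : List FLetter :=
  L.map (fun a => FLetter.red a.b a.s) ++ L.map (fun a => FLetter.blue a.s a.d)

lemma mkF_word (l : List FLetter) : mkF (wordProd l) = (l.map fun e => mkF (ιA e)).prod := by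
  simp [wordProd, map_list_prod, Function.comp_def]

lemma mkF_arcWord (L : List Arc) : mkF (wordProd (arcWord L)) = AR L * AB L := by
  simp [mkF_word, arcWord, AR, AB, Rl, Bll, Function.comp_def]

lemma arcWord_shift (m n) (L : List Arc) : (arcWord L).map (FLetter.shift m n) =
    arcWord (L.map fun a => ⟨a.b, shiftSeq m n a.s, a.d⟩) := by
  simp [arcWord, FLetter.shift, Function.comp_def]

lemma Ftilde_gen {x : FA} (h : ∃ (k : ℕ) (bs ds : Fin k → Brk) (seqs : Fin k → PSeq),
      x = ((List.finRange k).map fun i => Rl (bs i) (seqs i)).prod *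
            ((List.finRange k).map fun i => Bll (seqs i) (ds i)).prod) :
    ∃ L, x = mkF (wordProd (arcWord L)) := by
  obtain ⟨k, bs, ds, seqs, rfl⟩ := h
  refine ⟨(List.finRange k).map fun i => ⟨bs i, seqs i, ds i⟩, ?_⟩
  rw [mkF_arcWord]
  simp [AR, AB, Function.comp_def]

lemma Ftilde_star (mstar : FA →ₗ[ℂ] FA →ₗ[ℂ] FA)
    (H : ∀ u v : FreeA, mstar (mkF u) (mkF v) = mkF (starF u v)) :
    ∀ P ∈ Ftilde, ∀ Q ∈ Ftilde, mstar P Q ∈ Ftilde := by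
  intro P hP Q hQ
  induction hP using Submodule.span_induction with
  | zero => simp
  | add x y _ _ hx hy => rw [map_add, LinearMap.add_apply]; exact Submodule.add_mem _ hx hy
  | smul c x _ hx => rw [map_smul, LinearMap.smul_apply]; exact Submodule.smul_mem _ _ hx
  | mem x hx =>
    obtain ⟨L, rfl⟩ := Ftilde_gen hx
    induction hQ using Submodule.span_induction with
    | zero => simp
    | add x y _ _ hx hy => rw [map_add]; exact Submodule.add_mem _ hx hy
    | smul c x _ hx => rw [map_smul]; exact Submodule.smul_mem _ _ hx
    | mem y hy =>
      obtain ⟨M, rfl⟩ := Ftilde_gen hy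
      rw [H, starF_word, arcWord_shift, wordProd_append, map_mul, mkF_arcWord, mkF_arcWord]
      have := move_all (M.map fun a => ⟨a.b, shiftSeq (wordSize (arcWord L))
        (wordOmega (arcWord L)) a.s, a.d⟩) L []
      simpa only [List.append_nil, List.nil_append, mul_assoc] using this

/-- (1) the ideal 𝒥_F absorbs the shifted product, hence ⋆ induces a
well-defined bilinear product on ℱ = ℂ⟨𝒜⟩/𝒥_F; (2) 𝐹̃ is closed under the induced
shifted product. -/
theorem shifted_product_descends :
    (∀ P ∈ JF, ∀ Q : FreeA, starF P Q ∈ JF ∧ starF Q P ∈ JF) ∧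
    (∃ mstar : FA →ₗ[ℂ] FA →ₗ[ℂ] FA,
      ∀ u v : FreeA, mstar (mkF u) (mkF v) = mkF (starF u v)) ∧
    (∀ mstar : FA →ₗ[ℂ] FA →ₗ[ℂ] FA,
      (∀ u v : FreeA, mstar (mkF u) (mkF v) = mkF (starF u v)) →
      ∀ P ∈ Ftilde, ∀ Q ∈ Ftilde, mstar P Q ∈ Ftilde) := by
  exact ⟨fun P hP Q => ⟨(mem_JF _).2 (absorb_left hP Q), (mem_JF _).2 (absorb_right hP Q)⟩,
    exists_mstar, Ftilde_star⟩
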